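/- (Lemma 1, expectation form.) Let (Ω, ℱ, P) be a probability space, let γ₀, γ* ∈ Γ₁ be fixed warping functions, and let G : Ω → Γ₁ be a random warping function such that the map ω ↦ ψ_B(G(ω)), viewed as taking values in the Banach space C([0,1], ℝ) of continuous functions with the supremum norm, is Bochner integrable with Bochner integral ∫_Ω ψ_B(G(ω)) dP(ω) = ψ_B(γ*). Then the map ω ↦ ψ_B(G(ω) ∘ γ₀) is also Bochner integrable in C([0,1], ℝ), and ∫_Ω ψ_B(G(ω) ∘ γ₀) dP(ω) = ψ_B(γ* ∘ γ₀). -/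

import Mathlib

open Set MeasureTheory

/-- The centered log-ratio (CLR) transform `ψ_B`, expressed in terms of the
derivative function `g = γ′` of a warping function:
`ψ_B(γ)(t) = log γ′(t) − ∫₀¹ log γ′(s) ds`. -/
noncomputable def clr (g : ℝ → ℝ) (t : ℝ) : ℝ :=
  Real.log (g t) - ∫ s in (0:ℝ)..1, Real.log (g s)

/-- The inverse CLR transform `ψ_B⁻¹(h)(t) = (∫₀ᵗ exp h) / (∫₀¹ exp h)`. -/
noncomputable def psiInv (h : ℝ → ℝ) (t : ℝ) : ℝ :=
  (∫ s in (0:ℝ)..t, Real.exp (h s)) / ∫ s in (0:ℝ)..1, Real.exp (h s)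

/-- `γ` is a warping function in `Γ₁`, with (continuous) derivative `γ′` on `[0,1]`
bounded by `0 < m ≤ γ′ ≤ M`. -/
def IsWarping (γ γ' : ℝ → ℝ) (m M : ℝ) : Prop :=
  γ 0 = 0 ∧ γ 1 = 1 ∧ Set.MapsTo γ (Set.Icc 0 1) (Set.Icc 0 1) ∧
  (∀ t ∈ Set.Icc (0:ℝ) 1, HasDerivWithinAt γ (γ' t) (Set.Icc 0 1) t) ∧
  ContinuousOn γ' (Set.Icc 0 1) ∧ 0 < m ∧
  ∀ t ∈ Set.Icc (0:ℝ) 1, m ≤ γ' t ∧ γ' t ≤ M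

/-!
The CLR transform of `γ` is `log γ′` minus its mean. By the chain rule
`log (γ ∘ γ₀)′ = (log γ′) ∘ γ₀ + log γ₀′`, and centering annihilates constants, so the mean already
subtracted in `ψ_B(γ)` does not matter: `ψ_B(γ ∘ γ₀)` is the centering of `ψ_B(γ) ∘ γ₀` plus
`ψ_B(γ₀)`. For fixed `γ₀` this is a bounded affine function of `ψ_B(γ)` on `C([0, 1], ℝ)`, and
bounded affine maps commute with Bochner expectation.
-/

open scoped unitInterval

section Centering

variable {X Y E : Type*} [TopologicalSpace X] [CompactSpace X] [MeasurableSpace X]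
  [BorelSpace X] [TopologicalSpace Y] [CompactSpace Y] [MeasurableSpace Y]
  [BorelSpace Y] [NormedAddCommGroup E] [NormedSpace ℝ E] [CompleteSpace E]
  [SecondCountableTopologyEither X E] [SecondCountableTopologyEither Y E]

/-- Integration against a finite measure on a compact space, as a bounded operator on the
continuous functions with the supremum norm. -/
noncomputable def continuousMapIntegralCLM (μ : Measure X) [IsFiniteMeasure μ] : C(X, E) →L[ℝ] E :=
  L1.integralCLM ∘L ContinuousMap.toLp 1 μ ℝ

theorem continuousMapIntegralCLM_apply (μ : Measure X) [IsFiniteMeasure μ] (f : C(X, E)) :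
    continuousMapIntegralCLM μ f = ∫ x, f x ∂μ := by
  rw [continuousMapIntegralCLM, ContinuousLinearMap.comp_apply, ← L1.integral_eq,
    L1.integral_eq_integral]
  exact integral_congr_ae (ContinuousMap.coeFn_toLp (𝕜 := ℝ) μ f)

/-- The centering operator `f ↦ f - ∫ f dμ` on continuous functions. The CLR transform is centering
with respect to Lebesgue measure on `[0, 1]`, applied to `log γ′`. -/
noncomputable def centerCLM (μ : Measure X) [IsFiniteMeasure μ] : C(X, E) →L[ℝ] C(X, E) :=
  ContinuousLinearMap.id ℝ C(X, E) - ContinuousLinearMap.const ℝ X ∘L continuousMapIntegralCLM μ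

theorem centerCLM_eq_sub_const (μ : Measure X) [IsFiniteMeasure μ] (f : C(X, E)) :
    centerCLM μ f = f - ContinuousMap.const X (∫ x, f x ∂μ) := by
  rw [← continuousMapIntegralCLM_apply]
  rfl

theorem centerCLM_const (μ : Measure X) [IsProbabilityMeasure μ] (a : E) :
    centerCLM μ (ContinuousMap.const X a) = 0 := by
  simp [centerCLM_eq_sub_const]

theorem centerCLM_centerCLM_comp (μ : Measure X) [IsProbabilityMeasure μ] (ν : Measure Y)
    [IsFiniteMeasure ν] (f : C(Y, E)) (c : C(X, Y)) :
    centerCLM μ ((centerCLM ν f).comp c) = centerCLM μ (f.comp c) := by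
  rw [centerCLM_eq_sub_const ν, ContinuousMap.sub_comp, ContinuousMap.const_comp, map_sub,
    centerCLM_const, sub_zero]

end Centering

theorem eq_centerCLM_of_eq_clr {g : ℝ → ℝ} {ℓ φ : C(I, ℝ)} (hℓ : ∀ t : I, ℓ t = Real.log (g t))
    (hφ : ∀ t : I, φ t = clr g t) : φ = centerCLM volume ℓ := by
  have integral_log : ∫ t : I, ℓ t = ∫ s in (0 : ℝ)..1, Real.log (g s) :=
    calc ∫ t : I, ℓ t = ∫ t : I, Real.log (g t) := integral_congr_ae (.of_forall hℓ)
      _ = ∫ s in Icc (0 : ℝ) 1, Real.log (g s) :=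
        integral_subtype measurableSet_Icc fun s => Real.log (g s)
      _ = ∫ s in (0 : ℝ)..1, Real.log (g s) := by
        rw [integral_Icc_eq_integral_Ioc, intervalIntegral.integral_of_le zero_le_one]
  ext t
  rw [centerCLM_eq_sub_const, ContinuousMap.sub_apply, ContinuousMap.const_apply, hℓ, hφ, clr,
    integral_log]

namespace IsWarping

variable {γ γ' γ₀ γ₀' : ℝ → ℝ} {m M m₀ M₀ : ℝ}

theorem mapsTo (h : IsWarping γ γ' m M) : MapsTo γ (Icc 0 1) (Icc 0 1) := h.2.2.1

theorem continuousOn (h : IsWarping γ γ' m M) : ContinuousOn γ (Icc 0 1) :=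
  fun t ht => (h.2.2.2.1 t ht).continuousWithinAt

theorem continuousOn_deriv (h : IsWarping γ γ' m M) : ContinuousOn γ' (Icc 0 1) := h.2.2.2.2.1

theorem deriv_pos (h : IsWarping γ γ' m M) {t : ℝ} (ht : t ∈ Icc (0 : ℝ) 1) : 0 < γ' t :=
  h.2.2.2.2.2.1.trans_le (h.2.2.2.2.2.2 t ht).1

/-- A warping function as a continuous self-map of `[0, 1]`. -/
def toContinuousMap (h : IsWarping γ γ' m M) : C(I, I) :=
  ⟨h.mapsTo.restrict, h.continuousOn.mapsToRestrict h.mapsTo⟩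

/-- The function `log γ′` as an element of `C([0, 1], ℝ)`; it is the CLR transform of `γ` before
centering. -/
noncomputable def logOfDeriv (h : IsWarping γ γ' m M) : C(I, ℝ) :=
  ⟨(Icc 0 1).domRestrict fun t => Real.log (γ' t),
    (h.continuousOn_deriv.log fun _ ht => (h.deriv_pos ht).ne').domRestrict⟩

theorem logOfDeriv_comp_add_logOfDeriv_apply (h : IsWarping γ γ' m M)
    (h₀ : IsWarping γ₀ γ₀' m₀ M₀) (t : I) :
    (h.logOfDeriv.comp h₀.toContinuousMap + h₀.logOfDeriv) t =
      Real.log (γ' (γ₀ t) * γ₀' t) :=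
  (Real.log_mul (h.deriv_pos (h₀.mapsTo t.2)).ne' (h₀.deriv_pos t.2).ne').symm

theorem eq_centerCLM_comp_add_of_eq_clr (h : IsWarping γ γ' m M)
    (h₀ : IsWarping γ₀ γ₀' m₀ M₀) {φ ψ : C(I, ℝ)}
    (hφ : ∀ t : I, φ t = clr γ' t) (hψ : ∀ t : I, ψ t = clr (fun s => γ' (γ₀ s) * γ₀' s) t) :
    ψ = centerCLM volume (φ.comp h₀.toContinuousMap) + centerCLM volume h₀.logOfDeriv := by
  have φ_eq : φ = centerCLM volume h.logOfDeriv := eq_centerCLM_of_eq_clr (fun _ => rfl) hφ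
  rw [eq_centerCLM_of_eq_clr (logOfDeriv_comp_add_logOfDeriv_apply h h₀) hψ, map_add, φ_eq,
    centerCLM_centerCLM_comp]

end IsWarping

theorem integral_clm_add_const {Ω E F : Type*} [MeasurableSpace Ω]
    [NormedAddCommGroup E] [NormedSpace ℝ E] [CompleteSpace E]
    [NormedAddCommGroup F] [NormedSpace ℝ F] [CompleteSpace F]
    {P : Measure Ω} [IsProbabilityMeasure P] {f : Ω → E} (hf : Integrable f P)
    (L : E →L[ℝ] F) (b : F) :
    ∫ ω, (L (f ω) + b) ∂P = L (∫ ω, f ω ∂P) + b := by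
  rw [integral_add (L.integrable_comp hf) (integrable_const b), L.integral_comp_comm hf,
    integral_const, probReal_univ, one_smul]

/-- Lemma 1, expectation form: let `P` be a probability measure on
`Ω`, let `γ₀, γ* ∈ Γ₁`, and let `G : Ω → Γ₁` be a random warping function.  Let
`Φ ω ∈ C([0,1], ℝ)` be the CLR transform `ψ_B(G ω)`, and `Ψ ω` that of
`G ω ∘ γ₀`; let `ψ* = ψ_B(γ*)` and `ψc = ψ_B(γ* ∘ γ₀)` as elements of the Banach
space `C([0,1], ℝ)`.  If `Φ` is Bochner integrable with `∫ Φ dP = ψ*`, then `Ψ`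
is Bochner integrable and `∫ Ψ dP = ψc`, i.e. `E[ψ_B(G ∘ γ₀)] = ψ_B(γ* ∘ γ₀)`. -/
theorem lemma1_expectation
    {Ω : Type*} [MeasurableSpace Ω]
    (P : MeasureTheory.Measure Ω) [MeasureTheory.IsProbabilityMeasure P]
    (G G' : Ω → ℝ → ℝ) (mG MG : Ω → ℝ)
    (γ₀ γ₀' γs γs' : ℝ → ℝ) (m₀ M₀ ms Ms : ℝ)
    (hG : ∀ ω, IsWarping (G ω) (G' ω) (mG ω) (MG ω))
    (hγ₀ : IsWarping γ₀ γ₀' m₀ M₀)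
    (hγs : IsWarping γs γs' ms Ms)
    (Φ Ψ : Ω → C(Set.Icc (0:ℝ) 1, ℝ))
    (ψstar ψcomp : C(Set.Icc (0:ℝ) 1, ℝ))
    (hΦ : ∀ ω, ∀ t : Set.Icc (0:ℝ) 1, Φ ω t = clr (G' ω) t)
    (hΨ : ∀ ω, ∀ t : Set.Icc (0:ℝ) 1,
      Ψ ω t = clr (fun s => G' ω (γ₀ s) * γ₀' s) t)
    (hstar : ∀ t : Set.Icc (0:ℝ) 1, ψstar t = clr γs' t)
    (hcomp : ∀ t : Set.Icc (0:ℝ) 1,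
      ψcomp t = clr (fun s => γs' (γ₀ s) * γ₀' s) t)
    (hint : MeasureTheory.Integrable Φ P)
    (hmean : (∫ ω, Φ ω ∂P) = ψstar) :
    MeasureTheory.Integrable Ψ P ∧ (∫ ω, Ψ ω ∂P) = ψcomp := by
  let L : C(I, ℝ) →L[ℝ] C(I, ℝ) :=
    centerCLM volume ∘L ContinuousMap.compCLM ℝ ℝ hγ₀.toContinuousMap
  let b : C(I, ℝ) := centerCLM volume hγ₀.logOfDeriv
  have Ψ_eq : Ψ = fun ω => L (Φ ω) + b :=
    funext fun ω => (hG ω).eq_centerCLM_comp_add_of_eq_clr hγ₀ (hΦ ω) (hΨ ω)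
  have ψcomp_eq : ψcomp = L ψstar + b := hγs.eq_centerCLM_comp_add_of_eq_clr hγ₀ hstar hcomp
  rw [Ψ_eq, ψcomp_eq, ← hmean]
  exact ⟨(L.integrable_comp hint).add (integrable_const b), integral_clm_add_const hint L b⟩
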